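/- (L∞ bounds for the optimal potential) Let 1 < p < ∞, q = p/(p−1), let u₀ be a nonnegative minimizer of J over U = (𝓗₀¹(Ω) ∩ L^{2q}(Ω)) ∖ {0}, set λ = J(u₀) and V₀ = M ‖u₀²‖_{L^q(Ω)}^{1−q} |u₀|^{2(q−1)}. Then ess sup_Ω u₀ ≤ (λ/M)^{(p−1)/2} ‖u₀‖_{L^{2q}(Ω)} and ess sup_Ω V₀ ≤ λ. -/

import Mathlib

open MeasureTheory Set Filter

noncomputable section

/-- The open unit square `Ω = (0,1) × (0,1)` in `ℝ²`. -/
def Omega : Set (ℝ × ℝ) := Ioo (0:ℝ) 1 ×ˢ Ioo (0:ℝ) 1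

/-- Test functions on a set `s`: smooth with compact support contained in `s`. -/
def IsTestOn (s : Set (ℝ × ℝ)) (φ : ℝ × ℝ → ℝ) : Prop :=
  ContDiff ℝ (⊤ : ℕ∞) φ ∧ HasCompactSupport φ ∧ tsupport φ ⊆ s

/-- Classical partial derivative in the `x`-direction. -/
def pdx (φ : ℝ × ℝ → ℝ) (p : ℝ × ℝ) : ℝ := fderiv ℝ φ p (1, 0)

/-- Classical partial derivative in the `y`-direction. -/
def pdy (φ : ℝ × ℝ → ℝ) (p : ℝ × ℝ) : ℝ := fderiv ℝ φ p (0, 1)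

/-- `g` is a weak `x`-partial derivative of `u` on `s`. -/
def HasWeakDerivXOn (s : Set (ℝ × ℝ)) (u g : ℝ × ℝ → ℝ) : Prop :=
  LocallyIntegrableOn u s volume ∧ LocallyIntegrableOn g s volume ∧
  ∀ φ : ℝ × ℝ → ℝ, IsTestOn s φ →
    ∫ p in s, u p * pdx φ p = - ∫ p in s, g p * φ p

/-- `g` is a weak `y`-partial derivative of `u` on `s`. -/
def HasWeakDerivYOn (s : Set (ℝ × ℝ)) (u g : ℝ × ℝ → ℝ) : Prop :=
  LocallyIntegrableOn u s volume ∧ LocallyIntegrableOn g s volume ∧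
  ∀ φ : ℝ × ℝ → ℝ, IsTestOn s φ →
    ∫ p in s, u p * pdy φ p = - ∫ p in s, g p * φ p

/-- Test functions on `Ω`. -/
def IsTest (φ : ℝ × ℝ → ℝ) : Prop := IsTestOn Omega φ

/-- Membership in the weighted Sobolev space `𝓗¹(Ω)`, with weak derivatives `gx, gy`:
`u ∈ L²(Ω)`, `gx = ∂ₓu`, `gy = ∂_y u` weakly, and `y^α₁ gx, x^α₂ gy ∈ L²(Ω)`. -/
structure MemH1 (α₁ α₂ : ℝ) (u gx gy : ℝ × ℝ → ℝ) : Prop where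
  memL2 : MemLp u 2 (volume.restrict Omega)
  weakX : HasWeakDerivXOn Omega u gx
  weakY : HasWeakDerivYOn Omega u gy
  wgx : MemLp (fun p => p.2 ^ α₁ * gx p) 2 (volume.restrict Omega)
  wgy : MemLp (fun p => p.1 ^ α₂ * gy p) 2 (volume.restrict Omega)

/-- The `𝓗¹(Ω)` norm of `u` (with weak derivatives `gx, gy`). -/
def H1Norm (α₁ α₂ : ℝ) (u gx gy : ℝ × ℝ → ℝ) : ℝ :=
  Real.sqrt ((∫ p in Omega, (u p) ^ 2) +
    (∫ p in Omega, (p.2 ^ α₁ * gx p) ^ 2) +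
    (∫ p in Omega, (p.1 ^ α₂ * gy p) ^ 2))

/-- Membership in `𝓗₀¹(Ω)`: member of `𝓗¹(Ω)` approximable in the `𝓗¹` norm by
test functions. -/
def MemH10 (α₁ α₂ : ℝ) (u gx gy : ℝ × ℝ → ℝ) : Prop :=
  MemH1 α₁ α₂ u gx gy ∧
  ∀ ε : ℝ, 0 < ε → ∃ φ : ℝ × ℝ → ℝ, IsTest φ ∧
    H1Norm α₁ α₂ (fun p => u p - φ p) (fun p => gx p - pdx φ p)
      (fun p => gy p - pdy φ p) < ε

/-- Membership in `H₀(Ω) = {u ∈ 𝓗₀¹(Ω) : ∫_Ω V u² < ∞}`. -/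
def MemH0 (α₁ α₂ : ℝ) (V u gx gy : ℝ × ℝ → ℝ) : Prop :=
  MemH10 α₁ α₂ u gx gy ∧
  IntegrableOn (fun p => V p * (u p) ^ 2) Omega volume

/-- The bilinear form `a(u,v)` associated with the sub-elliptic operator with potential `V`. -/
def aForm (α₁ α₂ : ℝ) (V u gx gy v hx hy : ℝ × ℝ → ℝ) : ℝ :=
  ∫ p in Omega, ((p.2 ^ α₁ * gx p) * (p.2 ^ α₁ * hx p) +
    (p.1 ^ α₂ * gy p) * (p.1 ^ α₂ * hy p) + V p * u p * v p)

/-- The bilinear form `a₁(u,v)` (no potential). -/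
def a1Form (α₁ α₂ : ℝ) (u gx gy v hx hy : ℝ × ℝ → ℝ) : ℝ :=
  ∫ p in Omega, ((p.2 ^ α₁ * gx p) * (p.2 ^ α₁ * hx p) +
    (p.1 ^ α₂ * gy p) * (p.1 ^ α₂ * hy p))

/-- Membership in `S_p = {V ∈ L^p(Ω) : V ≥ 0 a.e., ‖V‖_{L^p(Ω)} ≤ M}`. -/
def MemSp (ppow M : ℝ) (V : ℝ × ℝ → ℝ) : Prop :=
  MemLp V (ENNReal.ofReal ppow) (volume.restrict Omega) ∧
  (∀ᵐ p ∂(volume.restrict Omega), 0 ≤ V p) ∧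
  eLpNorm V (ENNReal.ofReal ppow) (volume.restrict Omega) ≤ ENNReal.ofReal M

/-- `u` (with weak derivatives `gx, gy`) is an eigenfunction of the sub-elliptic operator
with potential `V` for the eigenvalue `lam`. -/
def IsEigenfun (α₁ α₂ : ℝ) (V : ℝ × ℝ → ℝ) (lam : ℝ) (u gx gy : ℝ × ℝ → ℝ) : Prop :=
  MemH0 α₁ α₂ V u gx gy ∧
  ∀ v hx hy : ℝ × ℝ → ℝ, MemH0 α₁ α₂ V v hx hy →
    aForm α₁ α₂ V u gx gy v hx hy = lam * ∫ p in Omega, u p * v p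

/-- The first eigenvalue `λ₁(V) = inf { a(u,u) : u ∈ H₀(Ω), ‖u‖_{L²} = 1 }`. -/
def lam1 (α₁ α₂ : ℝ) (V : ℝ × ℝ → ℝ) : ℝ :=
  sInf { r | ∃ u gx gy : ℝ × ℝ → ℝ, MemH0 α₁ α₂ V u gx gy ∧
    (∫ p in Omega, (u p) ^ 2) = 1 ∧ r = aForm α₁ α₂ V u gx gy u gx gy }

/-- `sup { a(u,u) : u ∈ span(φ), ‖u‖_{L²(Ω)} = 1 }` for a finite family `φ` with
weak derivatives `φx, φy`. -/
def rayleighSup (α₁ α₂ : ℝ) (V : ℝ × ℝ → ℝ) {k : ℕ} (φ φx φy : Fin k → ℝ × ℝ → ℝ) : ℝ :=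
  sSup { s | ∃ c : Fin k → ℝ,
    (∫ p in Omega, (∑ i, c i * φ i p) ^ 2) = 1 ∧
    s = aForm α₁ α₂ V (fun p => ∑ i, c i * φ i p) (fun p => ∑ i, c i * φx i p)
      (fun p => ∑ i, c i * φy i p) (fun p => ∑ i, c i * φ i p)
      (fun p => ∑ i, c i * φx i p) (fun p => ∑ i, c i * φy i p) }

/-- The set of values `sup { a(u,u) : u ∈ E, ‖u‖ = 1 }` over `k`-dimensional
subspaces `E` of `H₀(Ω)` (represented by `L²(Ω)`-linearly independent families of
`k` elements of `H₀(Ω)`). -/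
def minmaxSet (α₁ α₂ : ℝ) (V : ℝ × ℝ → ℝ) (k : ℕ) : Set ℝ :=
  { r | ∃ φ φx φy : Fin k → ℝ × ℝ → ℝ,
      (∀ i, MemH0 α₁ α₂ V (φ i) (φx i) (φy i)) ∧
      (∀ c : Fin k → ℝ, (∀ᵐ p ∂(volume.restrict Omega), ∑ i, c i * φ i p = 0) → c = 0) ∧
      r = rayleighSup α₁ α₂ V φ φx φy }

/-- The `k`-th eigenvalue via the min-max principle. -/
def lamk (α₁ α₂ : ℝ) (V : ℝ × ℝ → ℝ) (k : ℕ) : ℝ := sInf (minmaxSet α₁ α₂ V k)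

/-- Membership in `U = (𝓗₀¹(Ω) ∩ L^{2q}(Ω)) \ {0}`. -/
def MemU (α₁ α₂ qe : ℝ) (u gx gy : ℝ × ℝ → ℝ) : Prop :=
  MemH10 α₁ α₂ u gx gy ∧
  MemLp u (ENNReal.ofReal (2 * qe)) (volume.restrict Omega) ∧
  ¬ (∀ᵐ p ∂(volume.restrict Omega), u p = 0)

/-- The functional `J(u) = (a₁(u,u) + M ‖u‖_{L^{2q}(Ω)}²) / ‖u‖_{L²(Ω)}²`. -/
def Jfun (α₁ α₂ M qe : ℝ) (u gx gy : ℝ × ℝ → ℝ) : ℝ :=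
  (a1Form α₁ α₂ u gx gy u gx gy +
    M * (∫ p in Omega, |u p| ^ (2 * qe)) ^ (1 / qe)) / (∫ p in Omega, (u p) ^ 2)

/-!
Compare the minimizer `u₀` with a truncation `T ∘ u₀` at height `c`. As `|T'| ≤ 1`, truncating does
not increase `a₁`, so minimality of `J` together with concavity of `x ↦ x ^ (1 / q)` yields
`‖u₀‖_{2q}^{2q} - ‖T u₀‖_{2q}^{2q} ≤ q c^{2(q-1)} (‖u₀‖₂² - ‖T u₀‖₂²)`, provided `c` satisfies
`M ‖u₀²‖_q^{1-q} c^{2(q-1)} = λ`, i.e. `c = (λ/M)^{(p-1)/2} ‖u₀‖_{2q}`. By strict convexity of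
`x ↦ x ^ q` the integrands satisfy the reverse inequality, strictly wherever `|u₀| > c`; hence
`|u₀| ≤ c` almost everywhere, which by the choice of `c` is the same as `V₀ ≤ λ`.

The truncation is taken smooth, so that it maps test functions to test functions and the chain rule
in `𝓗₀¹` follows by passing to the limit along approximating test functions.
-/

open scoped Topology NNReal ENNReal ContDiff

section SmoothTruncation

lemma hasDerivAt_expNegInvGlue (x : ℝ) :
    HasDerivAt expNegInvGlue (x⁻¹ ^ 2 * expNegInvGlue x) x := by
  simpa using expNegInvGlue.hasDerivAt_polynomial_eval_inv_mul 1 x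

lemma inv_sq_mul_expNegInvGlue_mem_Icc (x : ℝ) : x⁻¹ ^ 2 * expNegInvGlue x ∈ Icc 0 2 := by
  refine ⟨mul_nonneg (sq_nonneg _) (expNegInvGlue.nonneg x), ?_⟩
  rcases le_or_gt x 0 with hx | hx
  · simp [expNegInvGlue.zero_of_nonpos hx]
  · have hexp := Real.quadratic_le_exp_of_nonneg (inv_nonneg.2 hx.le)
    rw [expNegInvGlue, if_neg hx.not_ge, Real.exp_neg, ← div_eq_mul_inv,
      div_le_iff₀ (Real.exp_pos _)]
    linarith [inv_pos.2 hx]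

lemma expNegInvGlue_le_self {x : ℝ} (hx : 0 ≤ x) : expNegInvGlue x ≤ x := by
  rcases hx.eq_or_lt with rfl | hx
  · simp
  · rw [expNegInvGlue, if_neg hx.not_ge, Real.exp_neg]
    exact inv_le_of_inv_le₀ hx (by linarith [Real.add_one_le_exp x⁻¹])

/-- A smooth odd substitute for the truncation `t ↦ max (-c) (min t c)` at height `c`: it is the
identity on `[-c, c]` and, for `0 ≤ c`, strictly decreases the absolute value beyond that interval
without bringing it below `c`. -/
def smoothTruncation (c t : ℝ) : ℝ :=
  t - expNegInvGlue (t - c) / 2 + expNegInvGlue (-t - c) / 2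

variable {c t : ℝ}

lemma smoothTruncation_neg (c t : ℝ) : smoothTruncation c (-t) = -smoothTruncation c t := by
  simp only [smoothTruncation, neg_neg]
  ring

lemma contDiff_smoothTruncation (c : ℝ) : ContDiff ℝ ∞ (smoothTruncation c) := by
  have hglue (f : ℝ → ℝ) (hf : ContDiff ℝ ∞ f) : ContDiff ℝ ∞ fun t => expNegInvGlue (f t) :=
    expNegInvGlue.contDiff.comp hf
  exact (contDiff_id.sub ((hglue _ (contDiff_id.sub contDiff_const)).div_const 2)).add
    ((hglue _ (contDiff_neg.sub contDiff_const)).div_const 2)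

lemma hasDerivAt_smoothTruncation (c t : ℝ) :
    HasDerivAt (smoothTruncation c) (1 - (t - c)⁻¹ ^ 2 * expNegInvGlue (t - c) / 2 -
      (-t - c)⁻¹ ^ 2 * expNegInvGlue (-t - c) / 2) t := by
  have hright := (hasDerivAt_expNegInvGlue (t - c)).comp t ((hasDerivAt_id t).sub_const c)
  have hleft := (hasDerivAt_expNegInvGlue (-t - c)).comp t ((hasDerivAt_neg t).sub_const c)
  exact (((hasDerivAt_id t).sub (hright.div_const 2)).add (hleft.div_const 2)).congr_deriv
    (by ring)

lemma lipschitzWith_smoothTruncation (c : ℝ) : LipschitzWith 1 (smoothTruncation c) := by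
  refine lipschitzWith_of_nnnorm_deriv_le
    (fun t => (hasDerivAt_smoothTruncation c t).differentiableAt) fun t => ?_
  have hright := inv_sq_mul_expNegInvGlue_mem_Icc (t - c)
  have hleft := inv_sq_mul_expNegInvGlue_mem_Icc (-t - c)
  rw [← NNReal.coe_le_coe, coe_nnnorm, (hasDerivAt_smoothTruncation c t).deriv, Real.norm_eq_abs,
    NNReal.coe_one, abs_le]
  constructor <;> linarith [hright.1, hright.2, hleft.1, hleft.2]

lemma smoothTruncation_of_abs_le (ht : |t| ≤ c) : smoothTruncation c t = t := by
  have := abs_le.1 ht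
  rw [smoothTruncation, expNegInvGlue.zero_of_nonpos (by linarith),
    expNegInvGlue.zero_of_nonpos (by linarith)]
  ring

lemma smoothTruncation_mem_Ico (hc : 0 ≤ c) (ht : c < t) : smoothTruncation c t ∈ Ico c t := by
  have hpos := expNegInvGlue.pos_of_pos (sub_pos.2 ht)
  have hle := expNegInvGlue_le_self (sub_nonneg.2 ht.le)
  rw [smoothTruncation, expNegInvGlue.zero_of_nonpos (x := -t - c) (by linarith)]
  constructor <;> linarith

lemma abs_smoothTruncation_mem_Ico (hc : 0 ≤ c) (ht : c < |t|) :
    |smoothTruncation c t| ∈ Ico c |t| := by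
  wlog ht0 : 0 ≤ t generalizing t
  · simpa [smoothTruncation_neg] using
      this (t := -t) (by rwa [abs_neg]) (neg_nonneg.2 (not_le.1 ht0).le)
  · rw [abs_of_nonneg ht0] at ht ⊢
    have hmem := smoothTruncation_mem_Ico hc ht
    rwa [abs_of_nonneg (hc.trans hmem.1)]

lemma smoothTruncation_eq_zero_iff (hc : 0 < c) : smoothTruncation c t = 0 ↔ t = 0 := by
  rcases le_or_gt |t| c with ht | ht
  · rw [smoothTruncation_of_abs_le ht]
  · have hpos : 0 < |smoothTruncation c t| :=
      hc.trans_le (abs_smoothTruncation_mem_Ico hc.le ht).1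
    simp [abs_pos.1 hpos, abs_pos.1 (hc.trans ht)]

end SmoothTruncation

section Rpow

lemma abs_rpow_two_mul (t q : ℝ) : |t| ^ (2 * q) = (t ^ 2) ^ q := by
  rw [Real.rpow_mul (abs_nonneg t), Real.rpow_two, sq_abs]

lemma rpow_le_rpow_add_mul_sub {a b r : ℝ} (ha : 0 < a) (hb : 0 ≤ b) (hr₀ : 0 ≤ r) (hr₁ : r ≤ 1) :
    b ^ r ≤ a ^ r + r * a ^ (r - 1) * (b - a) := by
  have hamgm : b ^ r * a ^ (1 - r) ≤ r * b + (1 - r) * a :=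
    Real.geom_mean_le_arith_mean2_weighted hr₀ (sub_nonneg.2 hr₁) hb ha.le (by ring)
  have hcancel : a ^ (1 - r) * a ^ (r - 1) = 1 := by
    rw [← Real.rpow_add ha, sub_add_sub_cancel, sub_self, Real.rpow_zero]
  have hsplit : a ^ r = a * a ^ (r - 1) := by rw [Real.rpow_sub_one ha.ne']; field_simp
  calc b ^ r = b ^ r * a ^ (1 - r) * a ^ (r - 1) := by rw [mul_assoc, hcancel, mul_one]
    _ ≤ (r * b + (1 - r) * a) * a ^ (r - 1) := by gcongr
    _ = a ^ r + r * a ^ (r - 1) * (b - a) := by rw [hsplit]; ring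

lemma strictMonoOn_rpow_sub_mul {k q : ℝ} (hk : 0 ≤ k) (hq : 1 < q) :
    StrictMonoOn (fun x : ℝ => x ^ q - q * k ^ (q - 1) * x) (Ici k) := by
  have hderiv (x : ℝ) : HasDerivAt (fun x : ℝ => x ^ q - q * k ^ (q - 1) * x)
      (q * (x ^ (q - 1) - k ^ (q - 1))) x :=
    ((Real.hasDerivAt_rpow_const (Or.inr hq.le)).sub
      ((hasDerivAt_id x).const_mul _)).congr_deriv (by ring)
  refine strictMonoOn_of_deriv_pos (convex_Ici k)
    (fun x _ => (hderiv x).continuousAt.continuousWithinAt) fun x hx => ?_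
  rw [interior_Ici] at hx
  rw [(hderiv x).deriv]
  exact mul_pos (by linarith) (sub_pos.2 (Real.rpow_lt_rpow hk hx (by linarith)))

end Rpow

section Lp

variable {α : Type*} [MeasurableSpace α] {μ : Measure α} {p q : ℝ≥0∞}

lemma tendsto_eLpNorm_zero_of_dominated {E : Type*} [NormedAddCommGroup E] (hp : p ≠ ⊤)
    {f : ℕ → α → E} {bound : α → ℝ} (hf : ∀ n, AEStronglyMeasurable (f n) μ)
    (hbound : MemLp bound p μ) (hle : ∀ n, ∀ᵐ x ∂μ, ‖f n x‖ ≤ ‖bound x‖)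
    (hlim : ∀ᵐ x ∂μ, Tendsto (fun n => f n x) atTop (𝓝 0)) :
    Tendsto (fun n => eLpNorm (f n) p μ) atTop (𝓝 0) := by
  rcases eq_or_ne p 0 with rfl | hp₀
  · simp
  have hpos : 0 < p.toReal := ENNReal.toReal_pos hp₀ hp
  have hlintegral : Tendsto (fun n => ∫⁻ x, ‖f n x‖ₑ ^ p.toReal ∂μ) atTop (𝓝 (∫⁻ _, 0 ∂μ)) := by
    refine tendsto_lintegral_of_dominated_convergence' (fun x => ‖bound x‖ₑ ^ p.toReal)
      (fun n => (hf n).enorm.pow_const _) (fun n => ?_)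
      (lintegral_rpow_enorm_lt_top_of_eLpNorm_lt_top hp₀ hp hbound.2).ne ?_
    · filter_upwards [hle n] with x hx
      gcongr
      exact enorm_le_iff_norm_le.2 hx
    · filter_upwards [hlim] with x hx
      simpa [hpos] using hx.enorm.ennrpow_const p.toReal
  simp only [eLpNorm_eq_lintegral_rpow_enorm_toReal hp₀ hp]
  simpa [hpos] using hlintegral.ennrpow_const (1 / p.toReal)

lemma tendsto_eLpNorm_mul_sub_mul (hp₁ : 1 ≤ p) (hp : p ≠ ⊤) {K : ℝ≥0} {a : ℕ → α → ℝ}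
    {b f : α → ℝ} {g : ℕ → α → ℝ} (ha : ∀ n, AEStronglyMeasurable (a n) μ)
    (hb : AEStronglyMeasurable b μ) (haK : ∀ n x, ‖a n x‖ ≤ K) (hbK : ∀ x, ‖b x‖ ≤ K)
    (hab : ∀ᵐ x ∂μ, Tendsto (fun n => a n x) atTop (𝓝 (b x))) (hf : MemLp f p μ)
    (hg : ∀ n, AEStronglyMeasurable (g n) μ)
    (hfg : Tendsto (fun n => eLpNorm (fun x => f x - g n x) p μ) atTop (𝓝 0)) :
    Tendsto (fun n => eLpNorm (fun x => b x * f x - a n x * g n x) p μ) atTop (𝓝 0) := by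
  have hcoeff : Tendsto (fun n => eLpNorm (fun x => (b x - a n x) * f x) p μ) atTop (𝓝 0) := by
    refine tendsto_eLpNorm_zero_of_dominated hp (fun n => (hb.sub (ha n)).mul hf.1)
      (hf.const_mul (2 * K)) (fun n => .of_forall fun x => ?_) ?_
    · rw [norm_mul, norm_mul]
      gcongr
      calc ‖b x - a n x‖ ≤ ‖b x‖ + ‖a n x‖ := norm_sub_le _ _
        _ ≤ K + K := add_le_add (hbK x) (haK n x)
        _ = ‖(2 * K : ℝ)‖ := by rw [Real.norm_of_nonneg (by positivity), two_mul]
    · filter_upwards [hab] with x hx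
      simpa using (hx.const_sub (b x)).mul_const (f x)
  have hmain : Tendsto (fun n => K * eLpNorm (fun x => f x - g n x) p μ) atTop (𝓝 0) := by
    simpa using ENNReal.Tendsto.const_mul hfg (Or.inr ENNReal.coe_ne_top)
  refine tendsto_of_tendsto_of_tendsto_of_le_of_le tendsto_const_nhds
    (by simpa using hcoeff.add hmain) (fun n => zero_le) fun n => ?_
  calc eLpNorm (fun x => b x * f x - a n x * g n x) p μ
      = eLpNorm ((fun x => (b x - a n x) * f x) + fun x => a n x * (f x - g n x)) p μ := by
        congr 1
        ext x
        simp only [Pi.add_apply]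
        ring
    _ ≤ eLpNorm (fun x => (b x - a n x) * f x) p μ +
        eLpNorm (fun x => a n x * (f x - g n x)) p μ :=
      eLpNorm_add_le ((hb.sub (ha n)).mul hf.1) ((ha n).mul (hf.1.sub (hg n))) hp₁
    _ ≤ _ := by
      gcongr
      refine eLpNorm_le_nnreal_smul_eLpNorm_of_ae_le_mul (.of_forall fun x => ?_) p
      rw [nnnorm_mul]
      gcongr
      exact haK n x

lemma tendsto_integral_mul_of_tendsto_eLpNorm {ι : Type*} {l : Filter ι} [p.HolderConjugate q]
    {f h : α → ℝ} {g : ι → α → ℝ} (hf : MemLp f p μ) (hg : ∀ i, MemLp (g i) p μ) (hh : MemLp h q μ)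
    (hfg : Tendsto (fun i => eLpNorm (fun x => f x - g i x) p μ) l (𝓝 0)) :
    Tendsto (fun i => ∫ x, g i x * h x ∂μ) l (𝓝 (∫ x, f x * h x ∂μ)) := by
  refine tendsto_integral_of_L1' _ (hf.1.mul hh.1) (.of_forall fun i => (hg i).integrable_mul hh) ?_
  refine tendsto_of_tendsto_of_tendsto_of_le_of_le tendsto_const_nhds
    (h := fun i => eLpNorm (fun x => f x - g i x) p μ * eLpNorm h q μ)
    (by simpa using ENNReal.Tendsto.mul_const hfg (Or.inr hh.2.ne)) (fun i => zero_le) fun i => ?_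
  calc eLpNorm ((fun x => g i x * h x) - fun x => f x * h x) 1 μ
      = eLpNorm ((fun x => f x - g i x) • h) 1 μ := by
        rw [eLpNorm_sub_comm]
        congr 1
        ext x
        simp [sub_mul]
    _ ≤ eLpNorm (fun x => f x - g i x) p μ * eLpNorm h q μ :=
      eLpNorm_smul_le_mul_eLpNorm hh.1 (hf.1.sub (hg i).1)

lemma eLpNorm_two_eq_ofReal_sqrt_integral_sq {f : α → ℝ} (hf : MemLp f 2 μ) :
    eLpNorm f 2 μ = ENNReal.ofReal (√(∫ x, f x ^ 2 ∂μ)) := by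
  rw [hf.eLpNorm_eq_integral_rpow_norm two_ne_zero ENNReal.ofNat_ne_top, Real.sqrt_eq_rpow]
  simp

lemma tendsto_eLpNorm_two_zero_iff {ι : Type*} {l : Filter ι} {f : ι → α → ℝ}
    (hf : ∀ i, MemLp (f i) 2 μ) :
    Tendsto (fun i => eLpNorm (f i) 2 μ) l (𝓝 0) ↔
      Tendsto (fun i => ∫ x, f i x ^ 2 ∂μ) l (𝓝 0) := by
  have hnonneg (i : ι) : 0 ≤ ∫ x, f i x ^ 2 ∂μ := integral_nonneg fun x => sq_nonneg _
  simp only [fun i => eLpNorm_two_eq_ofReal_sqrt_integral_sq (hf i)]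
  constructor <;> intro h
  · have hsqrt := (ENNReal.tendsto_toReal ENNReal.zero_ne_top).comp h
    simpa [Function.comp_def, hnonneg] using hsqrt.pow 2
  · simpa using ENNReal.tendsto_ofReal h.sqrt

lemma integrable_abs_rpow_of_memLp {r : ℝ} (hr : 0 < r) {u : α → ℝ}
    (hu : MemLp u (ENNReal.ofReal r) μ) : Integrable (fun x => |u x| ^ r) μ := by
  simpa [ENNReal.toReal_ofReal hr.le] using
    hu.integrable_norm_rpow (ENNReal.ofReal_pos.2 hr).ne' ENNReal.ofReal_ne_top

lemma integral_abs_rpow_pos {r : ℝ} {u : α → ℝ} (hr : r ≠ 0)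
    (hint : Integrable (fun x => |u x| ^ r) μ) (hu : ¬ ∀ᵐ x ∂μ, u x = 0) :
    0 < ∫ x, |u x| ^ r ∂μ := by
  have hnonneg : 0 ≤ fun x => |u x| ^ r := fun x => Real.rpow_nonneg (abs_nonneg _) _
  refine (integral_nonneg hnonneg).lt_of_ne' fun hzero => hu ?_
  filter_upwards [(integral_eq_zero_iff_of_nonneg hnonneg hint).1 hzero] with x hx
  exact abs_eq_zero.1 ((Real.rpow_eq_zero (abs_nonneg _) hr).1 hx)

end Lp

section TestFunction

lemma memLp_mul_of_tsupport_subset {X : Type*} [TopologicalSpace X] [MeasurableSpace X]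
    [OpensMeasurableSpace X] {μ : Measure X} [IsFiniteMeasureOnCompacts μ] {p : ℝ≥0∞} {s : Set X}
    {f g : X → ℝ} (hs : IsOpen s) (hf : ContinuousOn f s) (hg : Continuous g)
    (hgc : HasCompactSupport g) (hgs : tsupport g ⊆ s) : MemLp (fun x => f x * g x) p μ := by
  have hcont : Continuous fun x => f x * g x := continuous_of_tsupport fun x hx =>
    (hf.continuousAt (hs.mem_nhds (hgs (tsupport_mul_subset_right hx)))).mul hg.continuousAt
  exact hcont.memLp_of_hasCompactSupport hgc.mul_left

namespace IsTestOn

variable {s : Set (ℝ × ℝ)} {φ ψ : ℝ × ℝ → ℝ} {F : ℝ → ℝ}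

lemma differentiable (hφ : IsTestOn s φ) : Differentiable ℝ φ :=
  hφ.1.differentiable (by simp)

lemma continuous_fderiv_apply (hφ : IsTestOn s φ) (v : ℝ × ℝ) :
    Continuous fun z => fderiv ℝ φ z v :=
  (hφ.1.continuous_fderiv (by simp)).clm_apply continuous_const

lemma memLp {p : ℝ≥0∞} {μ : Measure (ℝ × ℝ)} [IsFiniteMeasureOnCompacts μ] (hφ : IsTestOn s φ) :
    MemLp φ p μ :=
  hφ.1.continuous.memLp_of_hasCompactSupport hφ.2.1

lemma memLp_mul_fderiv {p : ℝ≥0∞} {μ : Measure (ℝ × ℝ)} [IsFiniteMeasureOnCompacts μ]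
    (hφ : IsTestOn s φ) (hs : IsOpen s) {w : ℝ × ℝ → ℝ} (hw : ContinuousOn w s) (v : ℝ × ℝ) :
    MemLp (fun z => w z * fderiv ℝ φ z v) p μ :=
  memLp_mul_of_tsupport_subset hs hw (hφ.continuous_fderiv_apply v) (hφ.2.1.fderiv_apply ℝ v)
    ((tsupport_fderiv_apply_subset ℝ v).trans hφ.2.2)

lemma comp (hφ : IsTestOn s φ) (hF : ContDiff ℝ ∞ F) (hF₀ : F 0 = 0) :
    IsTestOn s fun z => F (φ z) :=
  ⟨hF.comp hφ.1, hφ.2.1.comp_left hF₀, (tsupport_comp_subset hF₀ φ).trans hφ.2.2⟩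

lemma fderiv_comp_apply (hφ : IsTestOn s φ) (hF : Differentiable ℝ F) (z v : ℝ × ℝ) :
    fderiv ℝ (fun z => F (φ z)) z v = deriv F (φ z) * fderiv ℝ φ z v := by
  have hchain := (hF (φ z)).hasDerivAt.comp_hasFDerivAt z (hφ.differentiable z).hasFDerivAt
  rw [show (fun z => F (φ z)) = F ∘ φ from rfl, hchain.fderiv]
  simp

lemma setIntegral_mul_fderiv (hφ : IsTestOn s φ) (hψ : IsTestOn s ψ) (v : ℝ × ℝ) :
    ∫ z in s, φ z * fderiv ℝ ψ z v = -∫ z in s, fderiv ℝ φ z v * ψ z := by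
  rw [setIntegral_eq_integral_of_forall_compl_eq_zero fun z hz => by
      rw [image_eq_zero_of_notMem_tsupport fun h => hz (hφ.2.2 h), zero_mul],
    setIntegral_eq_integral_of_forall_compl_eq_zero fun z hz => by
      rw [image_eq_zero_of_notMem_tsupport fun h => hz (hψ.2.2 h), mul_zero]]
  have hφc := hφ.1.continuous
  have hψc := hψ.1.continuous
  exact integral_mul_fderiv_eq_neg_fderiv_mul_of_integrable
    (((hφ.continuous_fderiv_apply v).mul hψc).integrable_of_hasCompactSupport hψ.2.1.mul_left)
    ((hφc.mul (hψ.continuous_fderiv_apply v)).integrable_of_hasCompactSupport hφ.2.1.mul_right)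
    ((hφc.mul hψc).integrable_of_hasCompactSupport hφ.2.1.mul_right)
    (fun z _ => hφ.differentiable z) (fun z _ => hψ.differentiable z)

end IsTestOn

end TestFunction

section WeakDerivative

/-- `g` is the weak derivative of `u` on `s` in the direction `v`. The directions `(1, 0)` and
`(0, 1)` give back `HasWeakDerivXOn` and `HasWeakDerivYOn` definitionally. -/
def HasWeakDirDerivOn (s : Set (ℝ × ℝ)) (v : ℝ × ℝ) (u g : ℝ × ℝ → ℝ) : Prop :=
  LocallyIntegrableOn u s volume ∧ LocallyIntegrableOn g s volume ∧
  ∀ ψ : ℝ × ℝ → ℝ, IsTestOn s ψ → ∫ z in s, u z * fderiv ℝ ψ z v = -∫ z in s, g z * ψ z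

/-- The test functions `φ n` on `s` converge to `u` in `L²(s)` and almost everywhere, and their
derivatives in the direction `v` converge to `g` in the weighted space `{g | w g ∈ L²(s)}`. -/
structure IsApproxSeq (s : Set (ℝ × ℝ)) (v : ℝ × ℝ) (w u g : ℝ × ℝ → ℝ)
    (φ : ℕ → ℝ × ℝ → ℝ) : Prop where
  isTestOn : ∀ n, IsTestOn s (φ n)
  memLp : MemLp u 2 (volume.restrict s)
  memLp_mul : MemLp (fun z => w z * g z) 2 (volume.restrict s)
  tendsto_ae : ∀ᵐ z ∂volume.restrict s, Tendsto (fun n => φ n z) atTop (𝓝 (u z))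
  tendsto_eLpNorm :
    Tendsto (fun n => eLpNorm (fun z => u z - φ n z) 2 (volume.restrict s)) atTop (𝓝 0)
  tendsto_eLpNorm_mul : Tendsto (fun n =>
    eLpNorm (fun z => w z * g z - w z * fderiv ℝ (φ n) z v) 2 (volume.restrict s)) atTop (𝓝 0)

namespace IsApproxSeq

variable {s : Set (ℝ × ℝ)} {v : ℝ × ℝ} {w u g : ℝ × ℝ → ℝ} {φ : ℕ → ℝ × ℝ → ℝ}

lemma locallyIntegrableOn_deriv (h : IsApproxSeq s v w u g φ) (hs : IsOpen s)
    (hw : ContinuousOn w s) (hw₀ : ∀ z ∈ s, w z ≠ 0) : LocallyIntegrableOn g s volume := by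
  have hwg : LocallyIntegrableOn (fun z => (w z)⁻¹ * (w z * g z)) s volume :=
    (locallyIntegrableOn_of_locallyIntegrable_restrict
      (h.memLp_mul.locallyIntegrable one_le_two)).continuousOn_mul (hw.inv₀ hw₀)
      hs.isLocallyClosed
  rw [locallyIntegrableOn_iff hs.isLocallyClosed] at hwg ⊢
  exact fun k hk hkc => (hwg k hk hkc).congr_fun
    (fun z hz => inv_mul_cancel_left₀ (hw₀ z (hk hz)) _) hkc.measurableSet

lemma hasWeakDirDerivOn (h : IsApproxSeq s v w u g φ) (hs : IsOpen s) (hw : ContinuousOn w s)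
    (hw₀ : ∀ z ∈ s, w z ≠ 0) : HasWeakDirDerivOn s v u g := by
  refine ⟨locallyIntegrableOn_of_locallyIntegrable_restrict (h.memLp.locallyIntegrable one_le_two),
    h.locallyIntegrableOn_deriv hs hw hw₀, fun ψ hψ => ?_⟩
  have hψ' : MemLp (fun z => fderiv ℝ ψ z v) 2 (volume.restrict s) := by
    simpa using hψ.memLp_mul_fderiv hs (continuousOn_const (c := (1 : ℝ))) v
  -- `ψ / w ∈ L²` as `w` is bounded away from `0` on the support of `ψ`; it tests `w ∂ᵥφ n → w g`.
  have hwψ : MemLp (fun z => (w z)⁻¹ * ψ z) 2 (volume.restrict s) :=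
    memLp_mul_of_tsupport_subset hs (hw.inv₀ hw₀) hψ.1.continuous hψ.2.1 hψ.2.2
  have hcancel (f : ℝ × ℝ → ℝ) :
      ∫ z in s, (w z * f z) * ((w z)⁻¹ * ψ z) = ∫ z in s, f z * ψ z :=
    setIntegral_congr_fun hs.measurableSet fun z hz => by
      have := hw₀ z hz
      field_simp
  have hleft := tendsto_integral_mul_of_tendsto_eLpNorm h.memLp (fun n => (h.isTestOn n).memLp)
    hψ' h.tendsto_eLpNorm
  have hright := tendsto_integral_mul_of_tendsto_eLpNorm h.memLp_mul
    (fun n => (h.isTestOn n).memLp_mul_fderiv hs hw v) hwψ h.tendsto_eLpNorm_mul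
  simp only [hcancel] at hright
  simp only [fun n => (h.isTestOn n).setIntegral_mul_fderiv hψ v] at hleft
  exact tendsto_nhds_unique hleft hright.neg

lemma comp {F : ℝ → ℝ} {K : ℝ≥0} (h : IsApproxSeq s v w u g φ) (hs : IsOpen s)
    (hw : ContinuousOn w s) (hF : ContDiff ℝ ∞ F) (hFK : LipschitzWith K F) (hF₀ : F 0 = 0) :
    IsApproxSeq s v w (fun z => F (u z)) (fun z => deriv F (u z) * g z) fun n z => F (φ n z) := by
  have hF' : Continuous (deriv F) := hF.continuous_deriv (by simp)
  have hbound (t : ℝ) : ‖deriv F t‖ ≤ K := norm_deriv_le_of_lipschitz hFK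
  have hmeas {f : ℝ × ℝ → ℝ} (hf : AEStronglyMeasurable f (volume.restrict s)) :
      AEStronglyMeasurable (fun z => deriv F (f z)) (volume.restrict s) :=
    hF'.comp_aestronglyMeasurable hf
  refine ⟨fun n => (h.isTestOn n).comp hF hF₀, hFK.comp_memLp hF₀ h.memLp, ?_, ?_, ?_, ?_⟩
  · simp only [mul_left_comm (w _)]
    refine h.memLp_mul.of_le_mul (c := K) ((hmeas h.memLp.1).mul h.memLp_mul.1)
      (.of_forall fun z => ?_)
    rw [norm_mul]
    gcongr
    exact hbound _
  · filter_upwards [h.tendsto_ae] with z hz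
    exact (hF.continuous.tendsto _).comp hz
  · refine tendsto_of_tendsto_of_tendsto_of_le_of_le tendsto_const_nhds
      (h := fun n => K * eLpNorm (fun z => u z - φ n z) 2 (volume.restrict s))
      (by simpa using ENNReal.Tendsto.const_mul h.tendsto_eLpNorm (Or.inr ENNReal.coe_ne_top))
      (fun n => zero_le) fun n => ?_
    exact eLpNorm_le_nnreal_smul_eLpNorm_of_ae_le_mul
      (.of_forall fun z => by simpa [nndist_eq_nnnorm] using hFK.nndist_le (u z) (φ n z)) 2
  · simp only [(h.isTestOn _).fderiv_comp_apply (hF.differentiable (by simp)),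
      mul_left_comm (w _)]
    refine tendsto_eLpNorm_mul_sub_mul one_le_two ENNReal.ofNat_ne_top
      (fun n => hmeas (h.isTestOn n).1.continuous.aestronglyMeasurable) (hmeas h.memLp.1)
      (fun n z => hbound _) (fun z => hbound _) ?_ h.memLp_mul
      (fun n => ((h.isTestOn n).memLp_mul_fderiv (p := 2) hs hw v).1) h.tendsto_eLpNorm_mul
    filter_upwards [h.tendsto_ae] with z hz
    exact (hF'.tendsto _).comp hz

end IsApproxSeq

end WeakDerivative

section WeightedSobolev

variable {α₁ α₂ : ℝ} {u gx gy : ℝ × ℝ → ℝ} {F : ℝ → ℝ} {K : ℝ≥0}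

lemma isOpen_Omega : IsOpen Omega := isOpen_Ioo.prod isOpen_Ioo

lemma continuousOn_snd_rpow (α : ℝ) : ContinuousOn (fun z : ℝ × ℝ => z.2 ^ α) Omega :=
  continuousOn_snd.rpow_const fun _ hz => Or.inl hz.2.1.ne'

lemma continuousOn_fst_rpow (α : ℝ) : ContinuousOn (fun z : ℝ × ℝ => z.1 ^ α) Omega :=
  continuousOn_fst.rpow_const fun _ hz => Or.inl hz.1.1.ne'

lemma tendsto_H1Norm_zero_iff {ι : Type*} {l : Filter ι} {u gx gy : ι → ℝ × ℝ → ℝ} :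
    Tendsto (fun i => H1Norm α₁ α₂ (u i) (gx i) (gy i)) l (𝓝 0) ↔
      Tendsto (fun i => ∫ z in Omega, u i z ^ 2) l (𝓝 0) ∧
      Tendsto (fun i => ∫ z in Omega, (z.2 ^ α₁ * gx i z) ^ 2) l (𝓝 0) ∧
      Tendsto (fun i => ∫ z in Omega, (z.1 ^ α₂ * gy i z) ^ 2) l (𝓝 0) := by
  have hnonneg (f : ℝ × ℝ → ℝ) : 0 ≤ ∫ z in Omega, f z ^ 2 := integral_nonneg fun z => sq_nonneg _
  have hu (i : ι) := hnonneg (u i)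
  have hx (i : ι) := hnonneg fun z => z.2 ^ α₁ * gx i z
  have hy (i : ι) := hnonneg fun z => z.1 ^ α₂ * gy i z
  constructor
  · intro h
    have hsq := h.pow 2
    simp only [H1Norm, Real.sq_sqrt (add_nonneg (add_nonneg (hu _) (hx _)) (hy _)),
      zero_pow two_ne_zero] at hsq
    exact ⟨squeeze_zero hu (fun i => by linarith [hx i, hy i]) hsq,
      squeeze_zero hx (fun i => by linarith [hu i, hy i]) hsq,
      squeeze_zero hy (fun i => by linarith [hu i, hx i]) hsq⟩
  · rintro ⟨hu, hx, hy⟩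
    simpa [H1Norm] using ((hu.add hx).add hy).sqrt

lemma tendsto_H1Norm_sub_zero_iff {ι : Type*} {l : Filter ι} {φ : ι → ℝ × ℝ → ℝ}
    (hu : MemLp u 2 (volume.restrict Omega))
    (hgx : MemLp (fun z => z.2 ^ α₁ * gx z) 2 (volume.restrict Omega))
    (hgy : MemLp (fun z => z.1 ^ α₂ * gy z) 2 (volume.restrict Omega)) (hφ : ∀ i, IsTest (φ i)) :
    Tendsto (fun i => H1Norm α₁ α₂ (fun z => u z - φ i z) (fun z => gx z - pdx (φ i) z)
        (fun z => gy z - pdy (φ i) z)) l (𝓝 0) ↔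
      Tendsto (fun i => eLpNorm (fun z => u z - φ i z) 2 (volume.restrict Omega)) l (𝓝 0) ∧
      Tendsto (fun i => eLpNorm (fun z => z.2 ^ α₁ * gx z - z.2 ^ α₁ * pdx (φ i) z) 2
        (volume.restrict Omega)) l (𝓝 0) ∧
      Tendsto (fun i => eLpNorm (fun z => z.1 ^ α₂ * gy z - z.1 ^ α₂ * pdy (φ i) z) 2
        (volume.restrict Omega)) l (𝓝 0) := by
  rw [tendsto_H1Norm_zero_iff]
  simp only [mul_sub]
  exact and_congr (tendsto_eLpNorm_two_zero_iff fun i => hu.sub (hφ i).memLp).symm (and_congr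
    (tendsto_eLpNorm_two_zero_iff fun i => hgx.sub
      ((hφ i).memLp_mul_fderiv isOpen_Omega (continuousOn_snd_rpow α₁) (1, 0))).symm
    (tendsto_eLpNorm_two_zero_iff fun i => hgy.sub
      ((hφ i).memLp_mul_fderiv isOpen_Omega (continuousOn_fst_rpow α₂) (0, 1))).symm)

lemma memH10_iff_exists_isApproxSeq :
    MemH10 α₁ α₂ u gx gy ↔ ∃ φ : ℕ → ℝ × ℝ → ℝ,
      IsApproxSeq Omega (1, 0) (fun z => z.2 ^ α₁) u gx φ ∧
      IsApproxSeq Omega (0, 1) (fun z => z.1 ^ α₂) u gy φ := by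
  constructor
  · rintro ⟨hu, happrox⟩
    choose φ hφ hlt using fun n : ℕ => happrox (1 / (n + 1)) Nat.one_div_pos_of_nat
    have hnorm := squeeze_zero (fun n => Real.sqrt_nonneg _) (fun n => (hlt n).le)
      tendsto_one_div_add_atTop_nhds_zero_nat
    obtain ⟨hφu, hφx, hφy⟩ := (tendsto_H1Norm_sub_zero_iff hu.memL2 hu.wgx hu.wgy hφ).1 hnorm
    have hmeasure : TendstoInMeasure (volume.restrict Omega) φ atTop u :=
      tendstoInMeasure_of_tendsto_eLpNorm two_ne_zero
        (fun n => (hφ n).1.continuous.aestronglyMeasurable) hu.memL2.1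
        (by simpa only [eLpNorm_sub_comm] using! hφu)
    obtain ⟨ns, hns, hae⟩ := hmeasure.exists_seq_tendsto_ae
    have hns := hns.tendsto_atTop
    exact ⟨φ ∘ ns, ⟨fun n => hφ _, hu.memL2, hu.wgx, hae, hφu.comp hns, hφx.comp hns⟩,
      ⟨fun n => hφ _, hu.memL2, hu.wgy, hae, hφu.comp hns, hφy.comp hns⟩⟩
  · rintro ⟨φ, hx, hy⟩
    refine ⟨⟨hx.memLp, ?_, ?_, hx.memLp_mul, hy.memLp_mul⟩, fun ε hε => ?_⟩
    · exact hx.hasWeakDirDerivOn isOpen_Omega (continuousOn_snd_rpow α₁)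
        fun z hz => (Real.rpow_pos_of_pos hz.2.1 _).ne'
    · exact hy.hasWeakDirDerivOn isOpen_Omega (continuousOn_fst_rpow α₂)
        fun z hz => (Real.rpow_pos_of_pos hz.1.1 _).ne'
    · have hnorm := (tendsto_H1Norm_sub_zero_iff hx.memLp hx.memLp_mul hy.memLp_mul hx.isTestOn).2
        ⟨hx.tendsto_eLpNorm, hx.tendsto_eLpNorm_mul, hy.tendsto_eLpNorm_mul⟩
      obtain ⟨n, hn⟩ := (hnorm.eventually_lt_const hε).exists
      exact ⟨φ n, hx.isTestOn n, hn⟩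

lemma MemH10.comp (hu : MemH10 α₁ α₂ u gx gy) (hF : ContDiff ℝ ∞ F) (hFK : LipschitzWith K F)
    (hF₀ : F 0 = 0) :
    MemH10 α₁ α₂ (fun z => F (u z)) (fun z => deriv F (u z) * gx z)
      (fun z => deriv F (u z) * gy z) := by
  obtain ⟨φ, hx, hy⟩ := memH10_iff_exists_isApproxSeq.1 hu
  exact memH10_iff_exists_isApproxSeq.2 ⟨fun n z => F (φ n z),
    hx.comp isOpen_Omega (continuousOn_snd_rpow α₁) hF hFK hF₀,
    hy.comp isOpen_Omega (continuousOn_fst_rpow α₂) hF hFK hF₀⟩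

lemma MemU.comp {q : ℝ} (hu : MemU α₁ α₂ q u gx gy) (hF : ContDiff ℝ ∞ F)
    (hFK : LipschitzWith K F) (hF₀ : ∀ t, F t = 0 ↔ t = 0) :
    MemU α₁ α₂ q (fun z => F (u z)) (fun z => deriv F (u z) * gx z)
      (fun z => deriv F (u z) * gy z) :=
  ⟨hu.1.comp hF hFK ((hF₀ 0).2 rfl), hFK.comp_memLp ((hF₀ 0).2 rfl) hu.2.1,
    by simpa only [hF₀] using hu.2.2⟩

lemma a1Form_self_nonneg (α₁ α₂ : ℝ) (u gx gy : ℝ × ℝ → ℝ) :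
    0 ≤ a1Form α₁ α₂ u gx gy u gx gy :=
  integral_nonneg fun _ => add_nonneg (mul_self_nonneg _) (mul_self_nonneg _)

lemma MemH1.a1Form_comp_le (hu : MemH1 α₁ α₂ u gx gy) (hFK : LipschitzWith K F) :
    a1Form α₁ α₂ (fun z => F (u z)) (fun z => deriv F (u z) * gx z)
        (fun z => deriv F (u z) * gy z) (fun z => F (u z)) (fun z => deriv F (u z) * gx z)
        (fun z => deriv F (u z) * gy z) ≤ K ^ 2 * a1Form α₁ α₂ u gx gy u gx gy := by
  have hsq (t : ℝ) : deriv F t ^ 2 ≤ K ^ 2 :=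
    sq_le_sq.2 ((norm_deriv_le_of_lipschitz hFK).trans (le_abs_self _))
  rw [a1Form, a1Form, ← integral_const_mul]
  refine integral_mono_of_nonneg (.of_forall fun z =>
    add_nonneg (mul_self_nonneg _) (mul_self_nonneg _)) ?_ (.of_forall fun z => ?_)
  · simpa only [sq] using! (hu.wgx.integrable_sq.add hu.wgy.integrable_sq).const_mul _
  · calc _ = deriv F (u z) ^ 2 * (z.2 ^ α₁ * gx z * (z.2 ^ α₁ * gx z) +
          z.1 ^ α₂ * gy z * (z.1 ^ α₂ * gy z)) := by ring
      _ ≤ _ := mul_le_mul_of_nonneg_right (hsq _)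
        (add_nonneg (mul_self_nonneg _) (mul_self_nonneg _))

end WeightedSobolev

section Comparison

lemma threshold_rpow_eq {p q M N lam : ℝ} (hpq : p.HolderConjugate q) (hM : 0 < M) (hN : 0 < N)
    (hlam : 0 ≤ lam) :
    M * N ^ ((1 - q) / q) *
      ((lam / M) ^ ((p - 1) / 2) * N ^ (1 / (2 * q))) ^ (2 * (q - 1)) = lam := by
  have hq : q ≠ 0 := hpq.symm.ne_zero
  have hconj : (p - 1) / 2 * (2 * (q - 1)) = 1 := by linarith [hpq.mul_eq_add]
  have hexp : (1 - q) / q + 1 / (2 * q) * (2 * (q - 1)) = 0 := by field_simp; ring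
  have hratio : 0 ≤ lam / M := by positivity
  calc _ = M * (lam / M) ^ ((p - 1) / 2 * (2 * (q - 1))) *
        N ^ ((1 - q) / q + 1 / (2 * q) * (2 * (q - 1))) := by
        rw [Real.mul_rpow (by positivity) (by positivity), ← Real.rpow_mul hratio,
          ← Real.rpow_mul hN.le, Real.rpow_add hN]
        ring
    _ = lam := by rw [hconj, hexp, Real.rpow_one, Real.rpow_zero]; field_simp

lemma sub_le_mul_sub_of_quotient_le {A B M N N' S S' r k : ℝ} (hM : 0 < M) (hN : 0 < N)
    (hN' : 0 ≤ N') (hS : 0 < S) (hS' : 0 < S') (hr₀ : 0 < r) (hr₁ : r ≤ 1) (hBA : B ≤ A)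
    (hquot : (A + M * N ^ r) / S ≤ (B + M * N' ^ r) / S')
    (hk : M * N ^ (r - 1) * k = (A + M * N ^ r) / S) : N - N' ≤ 1 / r * k * (S - S') := by
  have hconcave := mul_le_mul_of_nonneg_left (rpow_le_rpow_add_mul_sub hN hN' hr₀.le hr₁) hM.le
  have hu : M * N ^ (r - 1) * k * S = A + M * N ^ r := by rw [hk]; field_simp
  have hv : M * N ^ (r - 1) * k * S' ≤ B + M * N' ^ r := by rwa [hk, ← le_div_iff₀ hS']
  have hscaled : M * N ^ (r - 1) * (r * (N - N')) ≤ M * N ^ (r - 1) * (k * (S - S')) := by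
    linarith
  have hmain := le_of_mul_le_mul_left hscaled (by positivity)
  rwa [mul_assoc, one_div_mul_eq_div, le_div_iff₀' hr₀]

lemma abs_rpow_sub_mul_sq_lt {c q s t : ℝ} (hq : 1 < q) (hc : 0 ≤ c) (hcs : c ≤ |s|)
    (hst : |s| < |t|) :
    |s| ^ (2 * q) - q * c ^ (2 * (q - 1)) * s ^ 2 <
      |t| ^ (2 * q) - q * c ^ (2 * (q - 1)) * t ^ 2 := by
  have hsq {x : ℝ} (hx : c ≤ |x|) : c ^ 2 ≤ x ^ 2 := sq_le_sq.2 (by rwa [abs_of_nonneg hc])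
  have hmono := strictMonoOn_rpow_sub_mul (sq_nonneg c) hq (hsq hcs) (hsq (hcs.trans hst.le))
    (sq_lt_sq.2 hst)
  simpa only [← abs_rpow_two_mul, abs_of_nonneg hc] using hmono

lemma ae_abs_le_of_integral_sub_le {α : Type*} [MeasurableSpace α] {μ : Measure α} {u : α → ℝ}
    {c q : ℝ} (hq : 1 < q) (hc : 0 ≤ c) (hu₂ : MemLp u 2 μ)
    (huq : MemLp u (ENNReal.ofReal (2 * q)) μ)
    (hle : (∫ x, |u x| ^ (2 * q) ∂μ) - ∫ x, |smoothTruncation c (u x)| ^ (2 * q) ∂μ ≤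
      q * c ^ (2 * (q - 1)) * ((∫ x, u x ^ 2 ∂μ) - ∫ x, smoothTruncation c (u x) ^ 2 ∂μ)) :
    ∀ᵐ x ∂μ, |u x| ≤ c := by
  have hT₀ : smoothTruncation c 0 = 0 := smoothTruncation_of_abs_le (by simpa)
  have hT := lipschitzWith_smoothTruncation c
  set Φ : ℝ → ℝ := fun t => |t| ^ (2 * q) - q * c ^ (2 * (q - 1)) * t ^ 2 with hΦ
  have hlt {t : ℝ} (ht : c < |t|) : Φ (smoothTruncation c t) < Φ t :=
    have hmem := abs_smoothTruncation_mem_Ico hc ht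
    abs_rpow_sub_mul_sq_lt hq hc hmem.1 hmem.2
  have hΦle (t : ℝ) : Φ (smoothTruncation c t) ≤ Φ t := by
    rcases le_or_gt |t| c with ht | ht
    · rw [smoothTruncation_of_abs_le ht]
    · exact (hlt ht).le
  have hpow {f : α → ℝ} (hf : MemLp f (ENNReal.ofReal (2 * q)) μ) :=
    integrable_abs_rpow_of_memLp (by linarith) hf
  have hsq {f : α → ℝ} (hf : MemLp f 2 μ) := hf.integrable_sq.const_mul (q * c ^ (2 * (q - 1)))
  have hΦ_integral {f : α → ℝ} (hf : MemLp f (ENNReal.ofReal (2 * q)) μ) (hf₂ : MemLp f 2 μ) :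
      ∫ x, Φ (f x) ∂μ = (∫ x, |f x| ^ (2 * q) ∂μ) - q * c ^ (2 * (q - 1)) * ∫ x, f x ^ 2 ∂μ := by
    rw [hΦ, integral_sub (hpow hf) (hsq hf₂), integral_const_mul]
  have huq' : MemLp (fun x => smoothTruncation c (u x)) _ μ := hT.comp_memLp hT₀ huq
  have hu₂' : MemLp (fun x => smoothTruncation c (u x)) _ μ := hT.comp_memLp hT₀ hu₂
  have hΦu : Integrable (fun x => Φ (u x)) μ := (hpow huq).sub (hsq hu₂)
  have hΦTu : Integrable (fun x => Φ (smoothTruncation c (u x))) μ := (hpow huq').sub (hsq hu₂')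
  have hΦint : ∫ x, Φ (u x) ∂μ ≤ ∫ x, Φ (smoothTruncation c (u x)) ∂μ := by
    rw [hΦ_integral huq hu₂, hΦ_integral huq' hu₂']
    linarith
  have hΦeq := (integral_eq_iff_of_ae_le hΦTu hΦu (.of_forall fun x => hΦle _)).1
    ((integral_mono hΦTu hΦu fun x => hΦle _).antisymm hΦint)
  filter_upwards [hΦeq] with x hx
  exact not_lt.1 fun h => (hlt h).ne hx

end Comparison

section Minimizer

variable {α₁ α₂ p q M : ℝ} {u gx gy v hx hy : ℝ × ℝ → ℝ}

namespace MemU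

lemma integral_sq_pos (hu : MemU α₁ α₂ q u gx gy) : 0 < ∫ z in Omega, u z ^ 2 := by
  have hint := hu.1.1.memL2.integrable_sq
  simpa using integral_abs_rpow_pos two_ne_zero (by simpa using hint) hu.2.2

lemma integral_abs_rpow_two_mul_pos (hu : MemU α₁ α₂ q u gx gy) (hq : 0 < q) :
    0 < ∫ z in Omega, |u z| ^ (2 * q) :=
  integral_abs_rpow_pos (by positivity)
    (integrable_abs_rpow_of_memLp (by positivity) hu.2.1) hu.2.2

lemma Jfun_pos (hu : MemU α₁ α₂ q u gx gy) (hq : 0 < q) (hM : 0 < M) :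
    0 < Jfun α₁ α₂ M q u gx gy :=
  div_pos (add_pos_of_nonneg_of_pos (a1Form_self_nonneg α₁ α₂ u gx gy)
    (mul_pos hM (Real.rpow_pos_of_pos (hu.integral_abs_rpow_two_mul_pos hq) _))) hu.integral_sq_pos

lemma integral_sub_le_of_Jfun_le {k : ℝ} (hu : MemU α₁ α₂ q u gx gy)
    (hv : MemU α₁ α₂ q v hx hy) (hq : 1 < q) (hM : 0 < M)
    (hform : a1Form α₁ α₂ v hx hy v hx hy ≤ a1Form α₁ α₂ u gx gy u gx gy)
    (hJ : Jfun α₁ α₂ M q u gx gy ≤ Jfun α₁ α₂ M q v hx hy)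
    (hk : M * (∫ z in Omega, |u z| ^ (2 * q)) ^ ((1 - q) / q) * k = Jfun α₁ α₂ M q u gx gy) :
    (∫ z in Omega, |u z| ^ (2 * q)) - ∫ z in Omega, |v z| ^ (2 * q) ≤
      q * k * ((∫ z in Omega, u z ^ 2) - ∫ z in Omega, v z ^ 2) := by
  have hq₀ : 0 < q := by linarith
  rw [show (1 - q) / q = 1 / q - 1 by field_simp] at hk
  simpa only [one_div_one_div] using sub_le_mul_sub_of_quotient_le hM
    (hu.integral_abs_rpow_two_mul_pos hq₀) (hv.integral_abs_rpow_two_mul_pos hq₀).le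
    hu.integral_sq_pos hv.integral_sq_pos (by positivity)
    (by rw [div_le_one hq₀]; exact hq.le) hform hJ hk

end MemU

theorem optimal_potential_Linfty_bounds_general (hpq : p.HolderConjugate q) (hM : 0 < M)
    (hu : MemU α₁ α₂ q u gx gy)
    (hmin : ∀ v hx hy : ℝ × ℝ → ℝ, MemU α₁ α₂ q v hx hy →
      Jfun α₁ α₂ M q u gx gy ≤ Jfun α₁ α₂ M q v hx hy) :
    (∀ᵐ z ∂volume.restrict Omega, |u z| ≤ (Jfun α₁ α₂ M q u gx gy / M) ^ ((p - 1) / 2) *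
      (∫ z in Omega, |u z| ^ (2 * q)) ^ (1 / (2 * q))) ∧
    ∀ᵐ z ∂volume.restrict Omega, M * (∫ z in Omega, |u z| ^ (2 * q)) ^ ((1 - q) / q) *
      |u z| ^ (2 * (q - 1)) ≤ Jfun α₁ α₂ M q u gx gy := by
  have hq : 1 < q := hpq.symm.lt
  have hN : 0 < ∫ z in Omega, |u z| ^ (2 * q) := hu.integral_abs_rpow_two_mul_pos hpq.symm.pos
  have hJ : 0 < Jfun α₁ α₂ M q u gx gy := hu.Jfun_pos hpq.symm.pos hM
  have hthreshold := threshold_rpow_eq hpq hM hN hJ.le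
  set c : ℝ := (Jfun α₁ α₂ M q u gx gy / M) ^ ((p - 1) / 2) *
    (∫ z in Omega, |u z| ^ (2 * q)) ^ (1 / (2 * q))
  have hc : 0 < c := by positivity
  have hT := lipschitzWith_smoothTruncation c
  have hv := hu.comp (contDiff_smoothTruncation c) hT fun _ => smoothTruncation_eq_zero_iff hc
  have hform := hu.1.1.a1Form_comp_le hT
  rw [NNReal.coe_one, one_pow, one_mul] at hform
  have hbound : ∀ᵐ z ∂volume.restrict Omega, |u z| ≤ c :=
    ae_abs_le_of_integral_sub_le hq hc.le hu.1.1.memL2 hu.2.1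
      (hu.integral_sub_le_of_Jfun_le hv hq hM hform (hmin _ _ _ hv) hthreshold)
  refine ⟨hbound, hbound.mono fun z hz => hthreshold.le.trans' ?_⟩
  gcongr

end Minimizer

/-- `L^∞` bounds for the optimal potential: with `λ = J(u₀)` and
`V₀ = M ‖u₀²‖_{L^q}^{1−q} |u₀|^{2(q−1)}` built from a nonnegative minimizer `u₀` of
`J`, one has `ess sup_Ω u₀ ≤ (λ/M)^{(p−1)/2} ‖u₀‖_{L^{2q}(Ω)}` and
`ess sup_Ω V₀ ≤ λ`. -/
theorem optimal_potential_Linfty_bounds (α₁ α₂ ppow qe M : ℝ)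
    (hα₁ : α₁ ∈ Ioo (0:ℝ) (1/2)) (hα₂ : α₂ ∈ Ioo (0:ℝ) (1/2))
    (hp : 1 < ppow) (hq : qe = ppow / (ppow - 1)) (hM : 0 < M)
    (u₀ g₀x g₀y : ℝ × ℝ → ℝ) (hmemU : MemU α₁ α₂ qe u₀ g₀x g₀y)
    (hpos : ∀ᵐ p ∂(volume.restrict Omega), 0 ≤ u₀ p)
    (hmin : ∀ u gx gy : ℝ × ℝ → ℝ, MemU α₁ α₂ qe u gx gy →
      Jfun α₁ α₂ M qe u₀ g₀x g₀y ≤ Jfun α₁ α₂ M qe u gx gy) :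
    ∀ lam : ℝ, lam = Jfun α₁ α₂ M qe u₀ g₀x g₀y →
    ∀ V₀ : ℝ × ℝ → ℝ,
      (V₀ = fun p : ℝ × ℝ =>
        M * (∫ q in Omega, |u₀ q| ^ (2 * qe)) ^ ((1 - qe) / qe) *
          |u₀ p| ^ (2 * (qe - 1))) →
      (∀ᵐ p ∂(volume.restrict Omega),
        u₀ p ≤ (lam / M) ^ ((ppow - 1) / 2) *
          (∫ q in Omega, |u₀ q| ^ (2 * qe)) ^ (1 / (2 * qe))) ∧
      (∀ᵐ p ∂(volume.restrict Omega), V₀ p ≤ lam) := by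
  rintro _ rfl _ rfl
  have hpq := (Real.holderConjugate_iff_eq_conjExponent hp).2 hq
  exact (optimal_potential_Linfty_bounds_general hpq hM hmemU hmin).imp_left
    fun h => h.mono fun _ => (le_abs_self _).trans
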